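/- The q-deformed gl_{ℓ+1}-Whittaker function is symmetric under permutations of the spectral variables: for every permutation σ of {1,…,ℓ+1} and every p ∈ ℤ^{ℓ+1}, Ψ_{z_{σ(1)},…,z_{σ(ℓ+1)}}(p) = Ψ_{z_1,…,z_{ℓ+1}}(p). -/

import Mathlib

open Finset

/-- The `q`-factorial `(n)_q! = ∏_{m=1}^{n} (1 - q^m)` (equal to `1` for `n ≤ 0`). -/
noncomputable def qfac {K : Type*} [Field K] (q : K) (n : ℤ) : K :=
  ∏ m ∈ Finset.range n.toNat, (1 - q ^ (m + 1))

/-- A Gelfand–Zetlin pattern: a triangular array `g k i = p_{k+1,i+1}` (0-indexed),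
satisfying the interlacing conditions `p_{k+1,i} ≥ p_{k,i} ≥ p_{k+1,i+1}`. -/
def IsGZ {n : ℕ} (g : ∀ k : Fin (n + 1), Fin ((k : ℕ) + 1) → ℤ) : Prop :=
  ∀ (k : Fin n) (i : Fin ((k : ℕ) + 1)),
    g k.castSucc i ≤ g k.succ i.castSucc ∧ g k.succ i.succ ≤ g k.castSucc i

/-- The weight of a Gelfand–Zetlin pattern in the explicit formula for the
`q`-deformed `gl_{n+1}`-Whittaker function. -/
noncomputable def gzWeight {K : Type*} [Field K] (q : K) {n : ℕ} (z : Fin (n + 1) → K)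
    (g : ∀ k : Fin (n + 1), Fin ((k : ℕ) + 1) → ℤ) : K :=
  z ⟨0, n.succ_pos⟩ ^ g ⟨0, n.succ_pos⟩ ⟨0, Nat.one_pos⟩ *
  (∏ k : Fin n, z k.succ ^ ((∑ i, g k.succ i) - ∑ i, g k.castSucc i)) *
  (∏ k : Fin n, ∏ i : Fin (k : ℕ), qfac q (g k.castSucc i.castSucc - g k.castSucc i.succ)) *
  (∏ k : Fin n, ∏ i : Fin ((k : ℕ) + 1),
      (qfac q (g k.succ i.castSucc - g k.castSucc i) *
       qfac q (g k.castSucc i - g k.succ i.succ)))⁻¹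

/-- The `q`-deformed `gl_{n+1}`-Whittaker function `Ψ_z(p)`: the sum over all
Gelfand–Zetlin patterns with top row `p` of their weights, if `p` is dominant,
and `0` otherwise. -/
noncomputable def whit {K : Type*} [Field K] (q : K) (n : ℕ) (z : Fin (n + 1) → K)
    (p : Fin (n + 1) → ℤ) : K := by
  classical
  exact if (∀ k : Fin n, p k.succ ≤ p k.castSucc) then
    ∑ g ∈ (Finset.Icc (fun (k : Fin (n + 1)) (_ : Fin ((k : ℕ) + 1)) => p (Fin.last n))
        (fun (k : Fin (n + 1)) (_ : Fin ((k : ℕ) + 1)) => p ⟨0, n.succ_pos⟩)).filter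
        (fun g => IsGZ g ∧ g (Fin.last n) = p),
      gzWeight q z g
  else 0

/-- The normalized `q`-deformed Whittaker function
`Ψ̃_z(p) = (∏_{i=1}^{n} (p_i - p_{i+1})_q!) ⬝ Ψ_z(p)`. -/
noncomputable def nwhit {K : Type*} [Field K] (q : K) (n : ℕ) (z : Fin (n + 1) → K)
    (p : Fin (n + 1) → ℤ) : K :=
  (∏ i : Fin n, qfac q (p i.castSucc - p i.succ)) * whit q n z p


noncomputable def rf {K : Type*} [Field K] (q : K) (n : ℤ) : K :=
  if 0 ≤ n then (qfac q n)⁻¹ else 0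

section
variable {K : Type*} [Field K] (q : K)

lemma rf_neg {n : ℤ} (h : n < 0) : rf q n = 0 := by simp [rf, h]
lemma rf_nonneg {n : ℤ} (h : 0 ≤ n) : rf q n = (qfac q n)⁻¹ := by simp [rf, h]

lemma qfac_zero : qfac q 0 = 1 := by simp [qfac]

lemma qfac_succ (n : ℕ) : qfac q ((n : ℤ) + 1) = qfac q n * (1 - q ^ (n + 1)) := by
  have : ((n : ℤ) + 1).toNat = n + 1 := by omega
  simp [qfac, this, Finset.prod_range_succ]

lemma qfac_ne (hq : ∀ n : ℕ, 1 ≤ n → q ^ n ≠ 1) (n : ℤ) : qfac q n ≠ 0 := by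
  rw [qfac, Finset.prod_ne_zero_iff]
  intro m _ h
  exact hq (m + 1) (by omega) (sub_eq_zero.mp h).symm

lemma rf_step (hq : ∀ n : ℕ, 1 ≤ n → q ^ n ≠ 1) (n : ℕ) :
    rf q ((n : ℤ) - 1) = (1 - q ^ n) * rf q n := by
  cases n with
  | zero => simp [rf]
  | succ m =>
    have h : (1 - q ^ (m + 1)) ≠ 0 := fun h => hq (m + 1) (by omega) (sub_eq_zero.mp h).symm
    have h2 := qfac_ne q hq m
    rw [rf_nonneg q (by omega), rf_nonneg q (by omega)]
    push_cast
    rw [qfac_succ, add_sub_cancel_right]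
    field_simp

lemma rf_step' (hq : ∀ n : ℕ, 1 ≤ n → q ^ n ≠ 1) (n : ℕ) :
    rf q (n : ℤ) = (1 - q ^ (n + 1)) * rf q ((n : ℤ) + 1) := by
  have := rf_step q hq (n + 1)
  push_cast at this
  simpa using this

/-- the sum appearing in the `q`-Vandermonde identity -/
noncomputable def vsum (d s t : ℕ) : K :=
  ∑ k ∈ range (s + 1), q ^ (k * (k + d)) * rf q k * rf q ((d : ℤ) + k) *
    rf q ((s : ℤ) - k) * rf q ((t : ℤ) - k)

lemma vsum_step (hq : ∀ n : ℕ, 1 ≤ n → q ^ n ≠ 1) (d s t : ℕ) :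
    (1 - q ^ (s + 1)) * vsum q d (s + 1) t = (1 - q ^ (d + t + 1)) * vsum q (d + 1) s t := by
  have e1 : (1 - q ^ (s + 1)) * vsum q d (s + 1) t =
      (∑ k ∈ range (s + 2), q ^ (k * (k + d)) * rf q ((k : ℤ) - 1) * rf q ((d : ℤ) + k) *
        rf q ((s : ℤ) + 1 - k) * rf q ((t : ℤ) - k)) +
      ∑ k ∈ range (s + 2), q ^ (k * (k + d) + k) * rf q (k : ℤ) * rf q ((d : ℤ) + k) *
        rf q ((s : ℤ) - k) * rf q ((t : ℤ) - k) := by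
    rw [vsum, Finset.mul_sum, ← Finset.sum_add_distrib]
    refine Finset.sum_congr rfl fun k hk => ?_
    have hk : k ≤ s + 1 := by simpa [Nat.lt_succ_iff] using hk
    obtain ⟨j, hj⟩ := Nat.exists_eq_add_of_le hk
    have h1 := rf_step q hq k
    have h2 := rf_step q hq j
    have e3 : (s : ℤ) - k = j - 1 := by omega
    have e4 : (s : ℤ) + 1 - k = j := by omega
    push_cast
    rw [e3, e4, h1, h2, hj]
    ring
  rw [e1, Finset.sum_range_succ' _ (s + 1), Finset.sum_range_succ _ (s + 1)]
  have z1 : rf q ((s : ℤ) - ((s + 1 : ℕ) : ℤ)) = 0 := rf_neg q (by omega)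
  have z2 : rf q (((0 : ℕ) : ℤ) - 1) = 0 := rf_neg q (by omega)
  rw [z1, z2, vsum, Finset.mul_sum]
  simp only [mul_zero, zero_mul, add_zero]
  rw [← Finset.sum_add_distrib]
  refine Finset.sum_congr rfl fun k hk => ?_
  have e1 : ((k + 1 : ℕ) : ℤ) - 1 = k := by omega
  have e2 : (d : ℤ) + ((k + 1 : ℕ) : ℤ) = ((d + k : ℕ) : ℤ) + 1 := by push_cast; ring
  have e3 : ((d + 1 : ℕ) : ℤ) + k = ((d + k : ℕ) : ℤ) + 1 := by push_cast; ring
  have e4 : (s : ℤ) + 1 - ((k + 1 : ℕ) : ℤ) = s - k := by push_cast; ring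
  have e5 : (d : ℤ) + k = ((d + k : ℕ) : ℤ) := by push_cast; ring
  have e6 : (t : ℤ) - ((k + 1 : ℕ) : ℤ) = t - k - 1 := by push_cast; ring
  rw [e1, e2, e3, e4, e5, e6, rf_step' q hq (d + k)]
  rcases le_or_gt k t with hkt | hkt
  · obtain ⟨j, rfl⟩ := Nat.exists_eq_add_of_le hkt
    have e7 : ((k + j : ℕ) : ℤ) - k = j := by push_cast; ring
    rw [e7, rf_step q hq j]
    ring
  · rw [rf_neg q (n := (t : ℤ) - k - 1) (by omega), rf_neg q (n := (t : ℤ) - k) (by omega)]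
    ring

lemma vsum_eq (hq : ∀ n : ℕ, 1 ≤ n → q ^ n ≠ 1) (s : ℕ) : ∀ d t : ℕ,
    vsum q d s t = qfac q ((d + s + t : ℕ) : ℤ) * rf q s * rf q t * rf q ((d + s : ℕ) : ℤ) *
      rf q ((d + t : ℕ) : ℤ) := by
  induction s with
  | zero =>
    intro d t
    have h := qfac_ne q hq ((d + t : ℕ) : ℤ)
    rw [rf_nonneg q (n := ((d + t : ℕ) : ℤ)) (by omega)]
    simp only [vsum, add_zero, zero_add, Finset.sum_range_one]
    have h1 : rf q ((0 : ℕ) : ℤ) = 1 := by simp [rf, qfac_zero]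
    have h2 : rf q (((0 : ℕ) : ℤ) - ((0 : ℕ) : ℤ)) = 1 := by simp [rf, qfac_zero]
    rw [h1, h2]
    simp only [Nat.cast_zero, add_zero, sub_zero]
    field_simp
    simp
  | succ s ih =>
    intro d t
    have h : (1 - q ^ (s + 1)) ≠ 0 := fun h => hq (s + 1) (by omega) (sub_eq_zero.mp h).symm
    apply mul_left_cancel₀ h
    rw [vsum_step q hq, ih]
    have a1 := rf_step' q hq s
    have a2 := rf_step' q hq (d + t)
    have e1 : d + 1 + s + t = d + (s + 1) + t := by ring
    have e2 : d + 1 + s = d + (s + 1) := by ring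
    have e3 : ((d + 1 + t : ℕ) : ℤ) = ((d + t : ℕ) : ℤ) + 1 := by push_cast; ring
    rw [e1, e2, e3, a1, a2]
    push_cast
    ring

lemma link (hq : ∀ n : ℕ, 1 ≤ n → q ^ n ≠ 1) (lo hi a c b b' : ℤ) (hb : b ≤ hi)
    (ha : lo ≤ a) (hc : lo ≤ c) :
    qfac q (b - b') * rf q (b - c) * rf q (c - b') * rf q (b - a) * rf q (a - b') =
    ∑ r ∈ Finset.Icc lo hi, q ^ ((r - a) * (r - c)).toNat * rf q (r - a) * rf q (r - c) *
      (rf q (b - r) * rf q (a + c - r - b')) := by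
  wlog hac : c ≤ a generalizing a c
  · have := this c a hc ha (by omega)
    calc _ = qfac q (b - b') * rf q (b - a) * rf q (a - b') * rf q (b - c) * rf q (c - b') := by
          ring
      _ = _ := by
        rw [this]
        refine Finset.sum_congr rfl fun r _ => ?_
        rw [mul_comm (r - c), add_comm c a]
        ring
  by_cases h : a ≤ b ∧ b' ≤ c
  · obtain ⟨h1, h2⟩ := h
    obtain ⟨s, hs⟩ := Int.eq_ofNat_of_zero_le (sub_nonneg.mpr h1)
    obtain ⟨t, ht⟩ := Int.eq_ofNat_of_zero_le (sub_nonneg.mpr h2)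
    obtain ⟨d, hd⟩ := Int.eq_ofNat_of_zero_le (sub_nonneg.mpr hac)
    have hv := vsum_eq q hq s d t
    have e1 : b - b' = ((d + s + t : ℕ) : ℤ) := by push_cast; omega
    have e2 : b - c = ((d + s : ℕ) : ℤ) := by push_cast; omega
    have e3 : a - b' = ((d + t : ℕ) : ℤ) := by push_cast; omega
    rw [e1, e2, e3, hs, ht]
    have : ∑ r ∈ Finset.Icc lo hi, q ^ ((r - a) * (r - c)).toNat * rf q (r - a) * rf q (r - c) *
      (rf q (b - r) * rf q (a + c - r - b')) = vsum q d s t := by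
      symm
      rw [vsum]
      apply Finset.sum_of_injOn (fun k : ℕ => a + (k : ℤ))
      · intro x _ y _ hxy
        simpa using hxy
      · intro x hx
        simp at hx ⊢
        omega
      · intro r hr hr2
        have : r < a ∨ b < r := by
          by_contra hcon
          push Not at hcon
          apply hr2
          refine ⟨(r - a).toNat, ?_, ?_⟩
          · simp; omega
          · simp; omega
        rcases this with h | h
        · rw [rf_neg q (n := r - a) (by omega)]; ring
        · rw [rf_neg q (n := b - r) (by omega)]; ring
      · intro k hk
        have f1 : a + (k : ℤ) - a = k := by ring
        have f2 : a + (k : ℤ) - c = (d : ℤ) + k := by omega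
        have f3 : b - (a + (k : ℤ)) = (s : ℤ) - k := by omega
        have f4 : a + c - (a + (k : ℤ)) - b' = (t : ℤ) - k := by omega
        have f5 : ((k : ℤ) * ((d : ℤ) + k)).toNat = k * (k + d) := by
          rw [add_comm]; exact_mod_cast Int.toNat_natCast _
        simp only [f1, f2, f3, f4, f5]
        ring
    rw [this, hv]
    ring
  · have hl : qfac q (b - b') * rf q (b - c) * rf q (c - b') * rf q (b - a) * rf q (a - b') = 0 := by
      rcases not_and_or.mp h with h | h
      · rw [rf_neg q (n := b - a) (by omega)]; ring
      · rw [rf_neg q (n := c - b') (by omega)]; ring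
    rw [hl]
    symm
    apply Finset.sum_eq_zero
    intro r _
    by_cases h3 : r < a
    · rw [rf_neg q (n := r - a) (by omega)]; ring
    rcases not_and_or.mp h with h | h
    · rw [rf_neg q (n := b - r) (by omega)]; ring
    · rw [rf_neg q (n := a + c - r - b') (by omega)]; ring
end

section
variable {K : Type*} [Field K] (q : K)

/-- the box of integer vectors with entries in `[lo, hi]` -/
noncomputable def ibox (lo hi : ℤ) (m : ℕ) : Finset (Fin m → ℤ) := Fintype.piFinset fun _ => Finset.Icc lo hi

lemma mem_ibox {lo hi : ℤ} {m : ℕ} {b : Fin m → ℤ} :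
    b ∈ ibox lo hi m ↔ ∀ i, lo ≤ b i ∧ b i ≤ hi := by
  simp [ibox, Fintype.mem_piFinset]

/-- product of the `q`-factorials of consecutive differences in a row -/
noncomputable def dfac : {m : ℕ} → (Fin m → ℤ) → K
  | 0, _ => 1
  | m + 1, b => ∏ i : Fin m, qfac q (b i.castSucc - b i.succ)

/-- reciprocal of the interlacing `q`-factorials between two rows -/
noncomputable def ifac {m : ℕ} (a : Fin (m + 1) → ℤ) (b : Fin m → ℤ) : K :=
  ∏ i : Fin m, (rf q (a i.castSucc - b i) * rf q (b i - a i.succ))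

lemma refl_sum {m : ℕ} (lo hi A C : ℤ) (R U : Fin (m + 1) → ℤ) (hR : ∀ i, lo ≤ R i)
    (hU : ∀ i, U i ≤ hi) (hs : ∑ i, R i + ∑ i, U i = A + C) (x y : K) :
    ∑ b ∈ ibox lo hi (m + 1), y ^ (A - ∑ i, b i) * x ^ ((∑ i, b i) - C) *
      ∏ i, (rf q (U i - b i) * rf q (b i - R i)) =
    ∑ b ∈ ibox lo hi (m + 1), x ^ (A - ∑ i, b i) * y ^ ((∑ i, b i) - C) *
      ∏ i, (rf q (U i - b i) * rf q (b i - R i)) := by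
  have key : ∀ x y : K, ∑ b ∈ ibox lo hi (m + 1), y ^ (A - ∑ i, b i) * x ^ ((∑ i, b i) - C) *
      ∏ i, (rf q (U i - b i) * rf q (b i - R i)) =
      ∑ b ∈ Fintype.piFinset (fun i => Finset.Icc (R i) (U i)),
      y ^ (A - ∑ i, b i) * x ^ ((∑ i, b i) - C) *
      ∏ i, (rf q (U i - b i) * rf q (b i - R i)) := by
    intro x y
    symm
    apply Finset.sum_subset
    · intro b hb
      rw [mem_ibox]
      intro i
      have h1 := Fintype.mem_piFinset.mp hb i
      rw [Finset.mem_Icc] at h1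
      have := hR i
      have := hU i
      omega
    · intro b _ hb
      rw [Fintype.mem_piFinset] at hb
      push Not at hb
      obtain ⟨i, hi⟩ := hb
      rw [Finset.mem_Icc] at hi
      have : rf q (U i - b i) * rf q (b i - R i) = 0 := by
        by_cases h : R i ≤ b i
        · rw [rf_neg q (n := U i - b i) (by omega), zero_mul]
        · rw [rf_neg q (n := b i - R i) (by omega), mul_zero]
      rw [Finset.prod_eq_zero (Finset.mem_univ i) this, mul_zero]
  rw [key, key]
  refine Finset.sum_bij' (fun b _ i => R i + U i - b i) (fun b _ i => R i + U i - b i) ?_ ?_ ?_ ?_ ?_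
  · intro b hb
    rw [Fintype.mem_piFinset] at hb ⊢
    intro i
    have := hb i
    rw [Finset.mem_Icc] at this ⊢
    omega
  · intro b hb
    rw [Fintype.mem_piFinset] at hb ⊢
    intro i
    have := hb i
    rw [Finset.mem_Icc] at this ⊢
    omega
  · intro b _; funext i; ring
  · intro b _; funext i; ring
  · intro b _
    have e1 : ∑ i, (R i + U i - b i) = A + C - ∑ i, b i := by
      rw [Finset.sum_sub_distrib, Finset.sum_add_distrib, hs]
    have e2 : A - (A + C - ∑ i, b i) = (∑ i, b i) - C := by ring
    have e3 : A + C - (∑ i, b i) - C = A - ∑ i, b i := by ring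
    have e4 : ∀ i, U i - (R i + U i - b i) = b i - R i := fun i => by ring
    have e5 : ∀ i, R i + U i - b i - R i = U i - b i := fun i => by ring
    simp only [e1, e2, e3, e4, e5]
    rw [mul_comm (y ^ _)]
    congr 1
    exact Finset.prod_congr rfl fun i _ => mul_comm _ _

lemma regroup (hq : ∀ n : ℕ, 1 ≤ n → q ^ n ≠ 1) {m : ℕ} (lo hi : ℤ) (a : Fin (m + 2) → ℤ)
    (c : Fin m → ℤ) (ha : a ∈ ibox lo hi (m + 2)) (hc : c ∈ ibox lo hi m) (b : Fin (m + 1) → ℤ)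
    (hb : b ∈ ibox lo hi (m + 1)) :
    dfac q b * ifac q a b * ifac q b c =
    ∑ r ∈ ibox lo hi m,
      (∏ i : Fin m, (q ^ ((r i - a i.succ.castSucc) * (r i - c i)).toNat *
        rf q (r i - a i.succ.castSucc) * rf q (r i - c i))) *
      ∏ i : Fin (m + 1), (rf q ((Fin.cons (a 0) (fun i : Fin m => a i.succ.castSucc + c i - r i) :
          Fin (m + 1) → ℤ) i - b i) *
        rf q (b i - (Fin.snoc r (a (Fin.last _)) : Fin (m + 1) → ℤ) i)) := by
  rw [mem_ibox] at ha hc hb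
  have h := fun i : Fin m => link q hq lo hi (a i.succ.castSucc) (c i) (b i.castSucc) (b i.succ)
    (hb _).2 (ha _).1 (hc _).1
  have h2 := Finset.prod_congr (rfl : (Finset.univ : Finset (Fin m)) = _) (fun i _ => h i)
  rw [Finset.prod_univ_sum] at h2
  have h3 : dfac q b * ifac q a b * ifac q b c = rf q (a 0 - b 0) *
      rf q (b (Fin.last _) - a (Fin.last _)) * (∏ i : Fin m, (qfac q (b i.castSucc - b i.succ) *
      rf q (b i.castSucc - c i) * rf q (c i - b i.succ) * rf q (b i.castSucc - a i.succ.castSucc)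
      * rf q (a i.succ.castSucc - b i.succ))) := by
    simp only [dfac, ifac, Finset.prod_mul_distrib]
    rw [Fin.prod_univ_succ (fun i : Fin (m + 1) => rf q (a i.castSucc - b i)),
      Fin.prod_univ_castSucc (fun i : Fin (m + 1) => rf q (b i - a i.succ))]
    simp only [Fin.castSucc_zero, Fin.succ_last, Fin.succ_castSucc]
    ring
  rw [h3, h2, Finset.mul_sum]
  refine Finset.sum_congr rfl fun r _ => ?_
  rw [Finset.prod_mul_distrib, Finset.prod_mul_distrib (f := fun i => rf q _)
    (g := fun i => rf q (b i - _)), Fin.prod_univ_succ (fun i : Fin (m + 1) => rf q (_ - b i)),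
      Fin.prod_univ_castSucc (fun i : Fin (m + 1) => rf q (b i - _))]
  simp only [Fin.cons_zero, Fin.cons_succ, Fin.snoc_castSucc, Fin.snoc_last]
  rw [Finset.prod_mul_distrib (f := fun i : Fin m => rf q (b i.castSucc - r i))]
  ring

lemma local_symm (hq : ∀ n : ℕ, 1 ≤ n → q ^ n ≠ 1) {m : ℕ} (lo hi : ℤ) (a : Fin (m + 2) → ℤ)
    (c : Fin m → ℤ) (ha : a ∈ ibox lo hi (m + 2)) (hc : c ∈ ibox lo hi m) (x y : K) :
    ∑ b ∈ ibox lo hi (m + 1), y ^ ((∑ i, a i) - ∑ i, b i) * x ^ ((∑ i, b i) - ∑ i, c i) *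
      (dfac q b * ifac q a b * ifac q b c) =
    ∑ b ∈ ibox lo hi (m + 1), x ^ ((∑ i, a i) - ∑ i, b i) * y ^ ((∑ i, b i) - ∑ i, c i) *
      (dfac q b * ifac q a b * ifac q b c) := by
  have expand : ∀ x y : K, ∑ b ∈ ibox lo hi (m + 1), y ^ ((∑ i, a i) - ∑ i, b i) *
      x ^ ((∑ i, b i) - ∑ i, c i) * (dfac q b * ifac q a b * ifac q b c) =
      ∑ r ∈ ibox lo hi m,
      (∏ i : Fin m, (q ^ ((r i - a i.succ.castSucc) * (r i - c i)).toNat *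
        rf q (r i - a i.succ.castSucc) * rf q (r i - c i))) *
      ∑ b ∈ ibox lo hi (m + 1), y ^ ((∑ i, a i) - ∑ i, b i) * x ^ ((∑ i, b i) - ∑ i, c i) *
      ∏ i : Fin (m + 1), (rf q ((Fin.cons (a 0) (fun i : Fin m => a i.succ.castSucc + c i - r i) :
          Fin (m + 1) → ℤ) i - b i) *
        rf q (b i - (Fin.snoc r (a (Fin.last _)) : Fin (m + 1) → ℤ) i)) := by
    intro x y
    simp only [Finset.mul_sum]
    rw [Finset.sum_comm]
    refine Finset.sum_congr rfl fun b hb => ?_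
    rw [regroup q hq lo hi a c ha hc b hb, Finset.mul_sum]
    refine Finset.sum_congr rfl fun r _ => ?_
    ring
  rw [expand, expand]
  refine Finset.sum_congr rfl fun r hr => ?_
  by_cases hra : ∀ i : Fin m, a i.succ.castSucc ≤ r i
  · congr 1
    rw [mem_ibox] at ha hc hr
    apply refl_sum
    · intro i
      refine Fin.lastCases ?_ (fun i => ?_) i
      · simpa using (ha _).1
      · simpa using (hr _).1
    · intro i
      refine Fin.cases ?_ (fun i => ?_) i
      · simpa using (ha _).2
      · have := hra i
        have := (hc i).2
        simp only [Fin.cons_succ]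
        omega
    · rw [Fin.sum_univ_succ (fun i => (Fin.cons _ _ : Fin (m + 1) → ℤ) i),
        Fin.sum_univ_castSucc (fun i => (Fin.snoc _ _ : Fin (m + 1) → ℤ) i),
        Fin.sum_univ_castSucc a, Fin.sum_univ_succ (fun i : Fin (m + 1) => a i.castSucc)]
      simp only [Fin.cons_zero, Fin.cons_succ, Fin.snoc_castSucc, Fin.snoc_last,
        Finset.sum_sub_distrib, Finset.sum_add_distrib, Fin.castSucc_zero]
      ring
  · push Not at hra
    obtain ⟨i, hi⟩ := hra
    rw [Finset.prod_eq_zero (Finset.mem_univ i), zero_mul, zero_mul]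
    rw [rf_neg q (n := r i - a i.succ.castSucc) (by omega)]
    ring

/-- recursive form of the pattern sum with all entries in `[lo, hi]` -/
noncomputable def phi (lo hi : ℤ) : (n : ℕ) → (Fin n → K) → (Fin n → ℤ) → K
  | 0, _, _ => 1
  | n + 1, z, p => ∑ b ∈ ibox lo hi n, z (Fin.last n) ^ ((∑ i, p i) - ∑ i, b i) *
      (dfac q b * ifac q p b) * phi lo hi n (fun i => z i.castSucc) b

lemma phi_succ_succ (lo hi : ℤ) (n : ℕ) (z : Fin (n + 2) → K) (p : Fin (n + 2) → ℤ) :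
    phi q lo hi (n + 2) z p = ∑ c ∈ ibox lo hi n, (∑ b ∈ ibox lo hi (n + 1),
      z (Fin.last (n + 1)) ^ ((∑ i, p i) - ∑ i, b i) *
      z (Fin.last n).castSucc ^ ((∑ i, b i) - ∑ i, c i) *
      (dfac q b * ifac q p b * ifac q b c)) *
      (dfac q c * phi q lo hi n (fun i => z i.castSucc.castSucc) c) := by
  simp only [phi, Finset.mul_sum, Finset.sum_mul]
  rw [Finset.sum_comm]
  refine Finset.sum_congr rfl fun c _ => Finset.sum_congr rfl fun b _ => ?_
  ring

lemma phi_swap (hq : ∀ n : ℕ, 1 ≤ n → q ^ n ≠ 1) (lo hi : ℤ) (n : ℕ) :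
    ∀ (i : Fin n) (z : Fin (n + 1) → K), ∀ p ∈ ibox lo hi (n + 1),
      phi q lo hi (n + 1) (fun j => z (Equiv.swap i.castSucc i.succ j)) p =
        phi q lo hi (n + 1) z p := by
  induction n with
  | zero => intro i; exact i.elim0
  | succ n ih =>
    intro i z p hp
    refine Fin.lastCases ?_ (fun i => ?_) i
    · rw [phi_succ_succ, phi_succ_succ]
      refine Finset.sum_congr rfl fun c hc => ?_
      rw [Fin.succ_last, Equiv.swap_apply_right, Equiv.swap_apply_left,
        local_symm q hq lo hi p c hp hc]
      congr 3
      funext j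
      rw [Equiv.swap_apply_of_ne_of_ne]
      · intro h
        have := congrArg Fin.val h
        simp at this
        omega
      · intro h
        have := congrArg Fin.val h
        simp at this
        omega
    · rw [phi, phi]
      refine Finset.sum_congr rfl fun b hb => ?_
      have h1 : Equiv.swap i.castSucc.castSucc i.castSucc.succ (Fin.last (n + 1)) =
          Fin.last (n + 1) := by
        apply Equiv.swap_apply_of_ne_of_ne
        · intro h
          have := congrArg Fin.val h
          simp at this
          omega
        · intro h
          have := congrArg Fin.val h
          simp at this
          omega
      have h2 : ∀ j : Fin (n + 1), Equiv.swap i.castSucc.castSucc i.castSucc.succ j.castSucc =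
          (Equiv.swap i.castSucc i.succ j).castSucc := by
        intro j
        rw [Fin.succ_castSucc]
        exact (Fin.castSucc_injective _).swap_apply _ _ _
      rw [h1]
      simp only [h2]
      rw [ih i (fun j => z j.castSucc) b hb]

lemma phi_perm (hq : ∀ n : ℕ, 1 ≤ n → q ^ n ≠ 1) (lo hi : ℤ) (n : ℕ)
    (σ : Equiv.Perm (Fin (n + 1))) : ∀ (z : Fin (n + 1) → K), ∀ p ∈ ibox lo hi (n + 1),
      phi q lo hi (n + 1) (fun j => z (σ j)) p = phi q lo hi (n + 1) z p := by
  have hσ : σ ∈ Submonoid.closure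
      (Set.range fun i : Fin n => Equiv.swap i.castSucc i.succ) := by
    rw [Equiv.Perm.mclosure_swap_castSucc_succ]
    trivial
  induction hσ using Submonoid.closure_induction with
  | mem s hs =>
    obtain ⟨i, rfl⟩ := hs
    exact phi_swap q hq lo hi n i
  | one => intro z p _; rfl
  | mul s t _ _ hs ht =>
    intro z p hp
    exact (ht (fun j => z (s j)) p hp).trans (hs z p hp)
end

section
variable {K : Type*} [Field K] (q : K)

/-- weight of an arbitrary triangular array; zero when interlacing fails -/
noncomputable def gw {n : ℕ} (z : Fin (n + 1) → K)
    (g : ∀ k : Fin (n + 1), Fin ((k : ℕ) + 1) → ℤ) : K :=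
  z 0 ^ g 0 0 * ∏ k : Fin n, (z k.succ ^ ((∑ i, g k.succ i) - ∑ i, g k.castSucc i) *
    (dfac q (g k.castSucc) * ifac q (m := (k : ℕ) + 1) (g k.succ) (g k.castSucc)))

lemma gw_zero {n : ℕ} (z : Fin (n + 1) → K)
    (g : ∀ k : Fin (n + 1), Fin ((k : ℕ) + 1) → ℤ) (h : ¬ IsGZ g) : gw q z g = 0 := by
  unfold IsGZ at h
  push Not at h
  obtain ⟨k, i, hi⟩ := h
  rw [gw, Finset.prod_eq_zero (Finset.mem_univ k), mul_zero]
  rw [ifac, Finset.prod_eq_zero (Finset.mem_univ i), mul_zero, mul_zero]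
  by_cases h : g k.castSucc i ≤ g k.succ i.castSucc
  · rw [rf_neg q (n := g k.castSucc i - g k.succ i.succ) (by have := hi h; omega), mul_zero]
  · rw [rf_neg q (n := g k.succ i.castSucc - g k.castSucc i) (by omega), zero_mul]

lemma gw_eq {n : ℕ} (z : Fin (n + 1) → K)
    (g : ∀ k : Fin (n + 1), Fin ((k : ℕ) + 1) → ℤ) (h : IsGZ g) : gzWeight q z g = gw q z g := by
  have e : ∀ k : Fin n, ifac q (m := (k : ℕ) + 1) (g k.succ) (g k.castSucc) =
      (∏ i : Fin ((k : ℕ) + 1), (qfac q (g k.succ i.castSucc - g k.castSucc i) *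
       qfac q (g k.castSucc i - g k.succ i.succ)))⁻¹ := by
    intro k
    rw [ifac, ← Finset.prod_inv_distrib]
    refine Finset.prod_congr rfl fun i _ => ?_
    have := h k i
    rw [mul_inv]
    congr 1
    · exact rf_nonneg q (by omega)
    · exact rf_nonneg q (by omega)
  rw [gw, gzWeight]
  simp only [e, Finset.prod_mul_distrib (s := (Finset.univ : Finset (Fin n)))]
  rw [← Finset.prod_inv_distrib (s := (Finset.univ : Finset (Fin n)))]
  rw [mul_assoc, mul_assoc]
  rfl

lemma phi_eq (lo hi : ℤ) (n : ℕ) : ∀ (z : Fin (n + 1) → K), ∀ p ∈ ibox lo hi (n + 1),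
    phi q lo hi (n + 1) z p = 
    ∑ g ∈ (Finset.Icc (fun (k : Fin (n + 1)) (_ : Fin ((k : ℕ) + 1)) => lo)
        (fun (k : Fin (n + 1)) (_ : Fin ((k : ℕ) + 1)) => hi)).filter
        (fun g : (∀ k : Fin (n + 1), Fin ((k : ℕ) + 1) → ℤ) => g (Fin.last n) = p), gw q z g := by
  induction n with
  | zero =>
    intro z p hp
    rw [mem_ibox] at hp
    rw [Finset.sum_eq_single (fun (k : Fin 1) (i : Fin ((k : ℕ) + 1)) => p ⟨i, by omega⟩)]
    · have : (ibox lo hi 0) = {Fin.elim0} := by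
        ext b
        simp [mem_ibox, Subsingleton.elim b Fin.elim0]
      simp [phi, this, gw, dfac, ifac]
    · intro g hg hne
      exfalso
      apply hne
      rw [Finset.mem_filter] at hg
      funext k i
      obtain rfl : k = Fin.last 0 := Subsingleton.elim _ _
      rw [hg.2]
      rfl
    · intro h
      exfalso
      apply h
      rw [Finset.mem_filter, Finset.mem_Icc]
      refine ⟨⟨fun k i => (hp _).1, fun k i => (hp _).2⟩, ?_⟩
      funext i
      rfl
  | succ n ih =>
    intro z p hp
    rw [phi]
    have h1 : ∀ b ∈ ibox lo hi (n + 1), z (Fin.last (n + 1)) ^ ((∑ i, p i) - ∑ i, b i) *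
      (dfac q b * ifac q p b) * phi q lo hi (n + 1) (fun i => z i.castSucc) b =
      ∑ g ∈ (Finset.Icc (fun (k : Fin (n + 1)) (_ : Fin ((k : ℕ) + 1)) => lo)
        (fun (k : Fin (n + 1)) (_ : Fin ((k : ℕ) + 1)) => hi)).filter
        (fun g : (∀ k : Fin (n + 1), Fin ((k : ℕ) + 1) → ℤ) => g (Fin.last n) = b), z (Fin.last (n + 1)) ^ ((∑ i, p i) - ∑ i, g (Fin.last n) i) *
      (dfac q (g (Fin.last n)) * ifac q (m := n + 1) p (g (Fin.last n))) *
        gw q (fun i => z i.castSucc) g := by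
      intro b hb
      rw [ih _ b hb, Finset.mul_sum]
      refine Finset.sum_congr rfl fun g hg => ?_
      rw [Finset.mem_filter] at hg
      obtain ⟨_, rfl⟩ := hg
      rfl
    rw [Finset.sum_congr rfl h1, Finset.sum_fiberwise_of_maps_to]
    · symm
      refine Finset.sum_bij' (fun g _ k => g k.castSucc)
        (fun h _ => Fin.snoc (α := fun k : Fin (n + 2) => Fin ((k : ℕ) + 1) → ℤ) h p) ?_ ?_ ?_ ?_ ?_
      · intro g hg
        rw [Finset.mem_filter, Finset.mem_Icc] at hg
        rw [Finset.mem_Icc]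
        exact ⟨fun k i => hg.1.1 k.castSucc i, fun k i => hg.1.2 k.castSucc i⟩
      · intro h hh
        rw [Finset.mem_Icc] at hh
        rw [mem_ibox] at hp
        rw [Finset.mem_filter, Finset.mem_Icc]
        refine ⟨⟨fun k => ?_, fun k => ?_⟩, ?_⟩
        · refine Fin.lastCases ?_ (fun k => ?_) k
          · rw [Fin.snoc_last]; exact fun i => (hp i).1
          · rw [Fin.snoc_castSucc]; exact hh.1 k
        · refine Fin.lastCases ?_ (fun k => ?_) k
          · rw [Fin.snoc_last]; exact fun i => (hp i).2
          · rw [Fin.snoc_castSucc]; exact hh.2 k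
        · rw [Fin.snoc_last]
      · intro g hg
        rw [Finset.mem_filter] at hg
        obtain ⟨_, rfl⟩ := hg
        exact Fin.snoc_init_self g
      · intro h hh
        funext k
        rw [Fin.snoc_castSucc]
      · intro g hg
        rw [Finset.mem_filter] at hg
        obtain ⟨_, rfl⟩ := hg
        simp only [gw]
        rw [Fin.prod_univ_castSucc]
        rw [← mul_assoc, mul_comm]
        rfl
    · intro g hg
      rw [Finset.mem_Icc] at hg
      rw [mem_ibox]
      exact fun i => ⟨hg.1 (Fin.last n) i, hg.2 (Fin.last n) i⟩

lemma whit_eq (n : ℕ) (z : Fin (n + 1) → K) (p : Fin (n + 1) → ℤ)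
    (hp : ∀ k : Fin n, p k.succ ≤ p k.castSucc) :
    p ∈ ibox (p (Fin.last n)) (p 0) (n + 1) ∧
    whit q n z p = phi q (p (Fin.last n)) (p 0) (n + 1) z p := by
  classical
  have ha : Antitone p := Fin.antitone_iff_succ_le.mpr hp
  have hb : p ∈ ibox (p (Fin.last n)) (p 0) (n + 1) := by
    rw [mem_ibox]
    exact fun i => ⟨ha (Fin.le_last i), ha (Fin.zero_le i)⟩
  refine ⟨hb, ?_⟩
  rw [phi_eq q _ _ n z p hb, whit, if_pos hp]
  symm
  refine (Finset.sum_subset_zero_on_sdiff ?_ ?_ ?_).symm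
  · intro g hg
    rw [Finset.mem_filter] at hg ⊢
    exact ⟨hg.1, hg.2.2⟩
  · intro g hg
    rw [Finset.mem_sdiff, Finset.mem_filter, Finset.mem_filter] at hg
    exact gw_zero q z g fun h => hg.2 ⟨hg.1.1, h, hg.1.2⟩
  · intro g hg
    rw [Finset.mem_filter] at hg
    exact gw_eq q z g hg.2.1
end

/-- the `q`-deformed `gl_{ℓ+1}`-Whittaker function is symmetric under
permutations of the spectral variables `z_1,…,z_{ℓ+1}`. -/
theorem whittaker_symmetric {K : Type*} [Field K] (q : K)
    (hq : ∀ n : ℕ, 1 ≤ n → q ^ n ≠ 1) (ℓ : ℕ) (hℓ : 1 ≤ ℓ)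
    (z : Fin (ℓ + 1) → K) (hz : ∀ i, z i ≠ 0)
    (σ : Equiv.Perm (Fin (ℓ + 1))) (p : Fin (ℓ + 1) → ℤ) :
    whit q ℓ (fun i => z (σ i)) p = whit q ℓ z p := by
  by_cases hp : ∀ k : Fin ℓ, p k.succ ≤ p k.castSucc
  · obtain ⟨hb, h1⟩ := whit_eq q ℓ z p hp
    rw [h1, (whit_eq q ℓ (fun i => z (σ i)) p hp).2]
    exact phi_perm q hq _ _ ℓ σ z p hb
  · rw [whit, whit, if_neg hp, if_neg hp]
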